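/- arXiv:1503.01704 — 3 statements merged into one kernel-verified Lean document; each statement's English description precedes it below -/
import Mathlib

section
/- Let r ≥ 2, let p ≠ q be primes, and let n > 1 be an integer with gcd(p, n) = 1 = gcd(q, n). Let ℤ^r act on Z = (ZMod n × ℤ_p) × ℤ_q × (Fin (r−2) → ℤ_p) so that the first standard generator acts by diagonal translation (k, x) ↦ (k + 1, x + 1) on the first factor, the second standard generator acts by x ↦ x + 1 on the factor ℤ_q, and for each i the (i+2)-nd standard generator adds 1 in the i-th coordinate of the last factor; let ℤ^r act on W = ℤ_p × (ZMod n × ℤ_q) × (Fin (r−2) → ℤ_p) analogously, with the first generator translating ℤ_p by 1 and the second generator acting by diagonal translation on ZMod n × ℤ_q. Then ℤ^r ↷ Z and ℤ^r ↷ W are continuously orbit equivalent. -/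
/-- `ZMod n` is given the discrete topology. -/
instance (n : ℕ) : TopologicalSpace (ZMod n) := ⊥
instance (n : ℕ) : DiscreteTopology (ZMod n) := ⟨rfl⟩

/-- The action of `ℤ^r` (with `r = s + 2`) on
`Z = (ZMod n × ℤ_p) × ℤ_q × (Fin s → ℤ_p)`: the first standard generator acts by
diagonal translation on the first factor, the second by translation on `ℤ_q`,
and the `(i+2)`-nd by translation in the `i`-th coordinate of the last factor. -/
noncomputable def actZ (p q n : ℕ) [Fact p.Prime] [Fact q.Prime] (s : ℕ)
    (g : Fin (s + 2) → ℤ) (z : (ZMod n × ℤ_[p]) × ℤ_[q] × (Fin s → ℤ_[p])) :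
    (ZMod n × ℤ_[p]) × ℤ_[q] × (Fin s → ℤ_[p]) :=
  ((z.1.1 + (g 0 : ZMod n), z.1.2 + (g 0 : ℤ_[p])),
    z.2.1 + (g 1 : ℤ_[q]),
    fun i => z.2.2 i + (g i.succ.succ : ℤ_[p]))

/-- The analogous action of `ℤ^r` on `W = ℤ_p × (ZMod n × ℤ_q) × (Fin s → ℤ_p)`:
the first standard generator translates `ℤ_p` by `1`, the second acts by diagonal
translation on `ZMod n × ℤ_q`, and the `(i+2)`-nd by translation in the `i`-th
coordinate of the last factor. -/
noncomputable def actW (p q n : ℕ) [Fact p.Prime] [Fact q.Prime] (s : ℕ)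
    (g : Fin (s + 2) → ℤ) (w : ℤ_[p] × (ZMod n × ℤ_[q]) × (Fin s → ℤ_[p])) :
    ℤ_[p] × (ZMod n × ℤ_[q]) × (Fin s → ℤ_[p]) :=
  (w.1 + (g 0 : ℤ_[p]),
    (w.2.1.1 + (g 1 : ZMod n), w.2.1.2 + (g 1 : ℤ_[q])),
    fun i => w.2.2 i + (g i.succ.succ : ℤ_[p]))

/-!
Adding an integer `m` to `k ∈ {0, …, n - 1}` produces the residue `k + m` mod `n` and the carry
`⌊(k + m) / n⌋`. If `n` is a unit of a topological ring `R`, the homeomorphism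
`(k, x) ↦ (k, k + n x)` identifies the `ℤ`-action induced from `nℤ ≅ ℤ ↷ R`, in which `m`
moves `k` to `k + m` and translates `x` by the carry, with the diagonal translation on `ZMod n × R`.
For fixed `k`, division with remainder makes `m` and the pair (residue, carry) determine each other.
Hence, in a product of two `ℤ`-actions one of which is induced, the factor `ZMod n` can be handed
over to the other one without changing orbits, and the cocycles depend only on the discrete
coordinate `k`.
-/

section ContinuousOrbitEquivalence

variable {G H K G' H' X Y Z X' Y' : Type*}

/-- The product action of `G × G'` on `X × X'`. -/
def prodAct (α : G → X → X) (α' : G' → X' → X') (g : G × G') : X × X' → X × X' :=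
  Prod.map (α g.1) (α' g.2)

variable [TopologicalSpace X] [TopologicalSpace Y] [TopologicalSpace Z] [TopologicalSpace X']
  [TopologicalSpace Y']

/-- Continuous orbit equivalence of the systems `G ↷ X` and `H ↷ Y`, each encoded by its
bare action map. -/
def ContinuouslyOrbitEquivalent (α : G → X → X) (β : H → Y → Y) : Prop :=
  ∃ (φ : X ≃ₜ Y) (a : G → X → H) (b : H → Y → G),
    (∀ g, IsLocallyConstant (a g)) ∧
    (∀ h, IsLocallyConstant (b h)) ∧
    (∀ g x, φ (α g x) = β (a g x) (φ x)) ∧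
    (∀ h y, φ.symm (β h y) = α (b h y) (φ.symm y))

theorem isLocallyConstant_apply_comp {f : X → H} {a : H → Y → K} {φ : X → Y}
    (hf : IsLocallyConstant f) (ha : ∀ h, IsLocallyConstant (a h)) (hφ : Continuous φ) :
    IsLocallyConstant fun x => a (f x) (φ x) := by
  refine (IsLocallyConstant.iff_eventually_eq _).2 fun x => ?_
  filter_upwards [hf.eventually_eq x, ((ha (f x)).comp_continuous hφ).eventually_eq x] with y hy hy'
  rw [hy]
  exact hy'

namespace ContinuouslyOrbitEquivalent

variable {α : G → X → X} {β : H → Y → Y} {γ : K → Z → Z} {α' : G' → X' → X'} {β' : H' → Y' → Y'}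

theorem of_conj (e : G ≃ H) (φ : X ≃ₜ Y) (hφ : ∀ g x, φ (α g x) = β (e g) (φ x)) :
    ContinuouslyOrbitEquivalent α β := by
  refine ⟨φ, fun g _ => e g, fun h _ => e.symm h, fun g => .const (e g),
    fun h => .const (e.symm h), hφ, fun h y => ?_⟩
  rw [Homeomorph.symm_apply_eq, hφ, e.apply_symm_apply, φ.apply_symm_apply]

theorem refl (α : G → X → X) : ContinuouslyOrbitEquivalent α α :=
  of_conj (.refl G) (.refl X) fun _ _ => rfl

theorem symm (h : ContinuouslyOrbitEquivalent α β) : ContinuouslyOrbitEquivalent β α :=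
  let ⟨φ, a, b, ha, hb, hφ, hψ⟩ := h
  ⟨φ.symm, b, a, hb, ha, hψ, hφ⟩

theorem trans (hαβ : ContinuouslyOrbitEquivalent α β) (hβγ : ContinuouslyOrbitEquivalent β γ) :
    ContinuouslyOrbitEquivalent α γ := by
  obtain ⟨φ, a, b, ha, hb, hφ, hψ⟩ := hαβ
  obtain ⟨φ', a', b', ha', hb', hφ', hψ'⟩ := hβγ
  refine ⟨φ.trans φ', fun g x => a' (a g x) (φ x), fun k z => b (b' k z) (φ'.symm z),
    fun g => isLocallyConstant_apply_comp (ha g) ha' φ.continuous,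
    fun k => isLocallyConstant_apply_comp (hb' k) hb φ'.symm.continuous,
    fun g x => ?_, fun k z => ?_⟩
  · simp only [Homeomorph.trans_apply, hφ, hφ']
  · simp only [Homeomorph.symm_trans_apply, hψ, hψ']

theorem prod (h : ContinuouslyOrbitEquivalent α β) (h' : ContinuouslyOrbitEquivalent α' β') :
    ContinuouslyOrbitEquivalent (prodAct α α') (prodAct β β') := by
  obtain ⟨φ, a, b, ha, hb, hφ, hψ⟩ := h
  obtain ⟨φ', a', b', ha', hb', hφ', hψ'⟩ := h'
  exact ⟨φ.prodCongr φ', fun g x => (a g.1 x.1, a' g.2 x.2), fun h y => (b h.1 y.1, b' h.2 y.2),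
    fun g => ((ha g.1).comp_continuous continuous_fst).prodMk
      ((ha' g.2).comp_continuous continuous_snd),
    fun h => ((hb h.1).comp_continuous continuous_fst).prodMk
      ((hb' h.2).comp_continuous continuous_snd),
    fun g x => Prod.ext (hφ g.1 x.1) (hφ' g.2 x.2),
    fun h y => Prod.ext (hψ h.1 y.1) (hψ' h.2 y.2)⟩

end ContinuouslyOrbitEquivalent

end ContinuousOrbitEquivalence

section FinSuccSucc

variable {s : ℕ} {X Y X' Y' Z : Type*}

/-- The action of `ℤ^(s + 2)` on `X × Y × Z` in which the first two generators act on
`X` and `Y` and the remaining `ℤ^s` acts on `Z`. -/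
def finSuccSuccAct (α : ℤ → X → X) (β : ℤ → Y → Y) (γ : (Fin s → ℤ) → Z → Z)
    (g : Fin (s + 2) → ℤ) (x : X × Y × Z) : X × Y × Z :=
  (α (g 0) x.1, β (g 1) x.2.1, γ (fun i => g i.succ.succ) x.2.2)

variable [TopologicalSpace X] [TopologicalSpace Y] [TopologicalSpace X'] [TopologicalSpace Y']
  [TopologicalSpace Z]

theorem finSuccSuccAct_coe_prodAct (α : ℤ → X → X) (β : ℤ → Y → Y) (γ : (Fin s → ℤ) → Z → Z) :
    ContinuouslyOrbitEquivalent (finSuccSuccAct α β γ) (prodAct (prodAct α β) γ) :=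
  .of_conj
    ((Fin.consEquiv fun _ => ℤ).symm.trans <|
      ((Equiv.refl ℤ).prodCongr (Fin.consEquiv fun _ => ℤ).symm).trans
        (Equiv.prodAssoc ℤ ℤ (Fin s → ℤ)).symm)
    (Homeomorph.prodAssoc X Y Z).symm fun _ _ => rfl

theorem ContinuouslyOrbitEquivalent.finSuccSucc {α : ℤ → X → X} {β : ℤ → Y → Y}
    {α' : ℤ → X' → X'} {β' : ℤ → Y' → Y'}
    (h : ContinuouslyOrbitEquivalent (prodAct α β) (prodAct α' β')) (γ : (Fin s → ℤ) → Z → Z) :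
    ContinuouslyOrbitEquivalent (finSuccSuccAct α β γ) (finSuccSuccAct α' β' γ) :=
  (finSuccSuccAct_coe_prodAct α β γ).trans <|
    (h.prod (.refl γ)).trans (finSuccSuccAct_coe_prodAct α' β' γ).symm

end FinSuccSucc

section Carry

variable {n : ℕ}

/-- The carry produced by adding `m` to the representative of `k` in `{0, …, n - 1}`. -/
def carry (k : ZMod n) (m : ℤ) : ℤ :=
  (k.val + m) / n

/-- The integer whose addition to `k` results in the residue `k + m` and the carry `c`. -/
def stepWithCarry (k : ZMod n) (m c : ℤ) : ℤ :=
  n * c + ((k + m : ZMod n).val - k.val)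

variable [NeZero n]

theorem val_add_intCast_add_mul_carry (k : ZMod n) (m : ℤ) :
    ((k + m : ZMod n).val : ℤ) + n * carry k m = k.val + m := by
  have residue : (k + m : ZMod n) = ((k.val + m : ℤ) : ZMod n) := by simp
  rw [residue, ZMod.val_intCast, carry, Int.emod_add_mul_ediv]

theorem add_stepWithCarry (k : ZMod n) (m c : ℤ) :
    k + (stepWithCarry k m c : ZMod n) = k + m := by
  simp [stepWithCarry]

theorem carry_stepWithCarry (k : ZMod n) (m c : ℤ) : carry k (stepWithCarry k m c) = c := by
  have sum_eq : (k.val : ℤ) + stepWithCarry k m c = (k + m : ZMod n).val + n * c := by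
    rw [stepWithCarry]
    ring
  have residue_lt : ((k + m : ZMod n).val : ℤ) < n := mod_cast ZMod.val_lt (k + m : ZMod n)
  rw [carry, sum_eq, Int.add_mul_ediv_left _ _ (NeZero.ne (n : ℤ)),
    Int.ediv_eq_zero_of_lt (Int.natCast_nonneg _) residue_lt, zero_add]

end Carry

section Induced

variable {X Y : Type*}

/-- The action of `ℤ` on `ZMod n × X` induced from an action of `nℤ ≅ ℤ` on `X`, where
`ℤ / nℤ` is represented by `{0, …, n - 1}`. -/
def inducedAct (n : ℕ) (α : ℤ → X → X) (m : ℤ) (z : ZMod n × X) : ZMod n × X :=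
  (z.1 + m, α (carry z.1 m) z.2)

theorem inducedAct_stepWithCarry {n : ℕ} [NeZero n] (α : ℤ → X → X) (k : ZMod n) (m c : ℤ)
    (x : X) : inducedAct n α (stepWithCarry k m c) (k, x) = (k + m, α c x) := by
  rw [inducedAct, add_stepWithCarry, carry_stepWithCarry]

variable [TopologicalSpace X] [TopologicalSpace Y]

theorem prodAct_inducedAct_coe (n : ℕ) [NeZero n] (α : ℤ → X → X) (β : ℤ → Y → Y) :
    ContinuouslyOrbitEquivalent (prodAct (inducedAct n α) β) (prodAct α (inducedAct n β)) := by
  let φ : (ZMod n × X) × Y ≃ₜ X × (ZMod n × Y) :=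
    ((Homeomorph.prodComm (ZMod n) X).prodCongr (.refl Y)).trans (.prodAssoc X (ZMod n) Y)
  let a (g : ℤ × ℤ) (k : ZMod n) : ℤ × ℤ := (carry k g.1, stepWithCarry k g.1 g.2)
  let b (h : ℤ × ℤ) (k : ZMod n) : ℤ × ℤ := (stepWithCarry k h.2 h.1, carry k h.2)
  refine ⟨φ, fun g z => a g z.1.1, fun h w => b h w.2.1,
    fun g => (IsLocallyConstant.of_discrete (a g)).comp_continuous (by fun_prop),
    fun h => (IsLocallyConstant.of_discrete (b h)).comp_continuous (by fun_prop), ?_, ?_⟩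
  · rintro g ⟨⟨k, x⟩, y⟩
    exact Prod.ext rfl (inducedAct_stepWithCarry β k g.1 g.2 y).symm
  · rintro h ⟨x, k, y⟩
    exact Prod.ext (inducedAct_stepWithCarry α k h.2 h.1 x).symm rfl

end Induced

section Translation

/-- The action of `ℤ` on `R` through its image in `R`. For a product of rings this is the diagonal
translation. -/
def translation (R : Type*) [AddGroupWithOne R] (m : ℤ) (x : R) : R :=
  x + m

variable {R S T : Type*} [Ring R] [TopologicalSpace R] [IsTopologicalRing R]
  [Ring S] [TopologicalSpace S] [IsTopologicalRing S] [TopologicalSpace T] {n : ℕ}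

/-- The homeomorphism `(k, x) ↦ (k, k + n x)`, which conjugates the induced action on `ZMod n × R`
to the diagonal translation. -/
noncomputable def valAddMulHomeomorph (hn : IsUnit (n : R)) : ZMod n × R ≃ₜ ZMod n × R where
  toFun z := (z.1, z.1.val + n * z.2)
  invFun z := (z.1, ↑hn.unit⁻¹ * (z.2 - z.1.val))
  left_inv z := by simp [← mul_assoc]
  right_inv z := by simp [← mul_assoc]
  continuous_toFun := by
    have : Continuous fun k : ZMod n => (k.val : R) := continuous_of_discreteTopology
    fun_prop
  continuous_invFun := by
    have : Continuous fun k : ZMod n => (k.val : R) := continuous_of_discreteTopology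
    fun_prop

theorem valAddMulHomeomorph_inducedAct [NeZero n] (hn : IsUnit (n : R)) (m : ℤ) (z : ZMod n × R) :
    valAddMulHomeomorph hn (inducedAct n (translation R) m z) =
      translation (ZMod n × R) m (valAddMulHomeomorph hn z) := by
  obtain ⟨k, x⟩ := z
  have carry_eq : ((k + m : ZMod n).val : R) + n * (carry k m : R) = k.val + m :=
    mod_cast congrArg (Int.cast : ℤ → R) (val_add_intCast_add_mul_carry k m)
  refine Prod.ext rfl ?_
  calc ((k + m : ZMod n).val : R) + n * (x + carry k m)
      = ((k + m : ZMod n).val + n * carry k m) + n * x := by noncomm_ring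
    _ = k.val + n * x + m := by rw [carry_eq, add_right_comm]

theorem inducedAct_translation_coe [NeZero n] (hn : IsUnit (n : R)) :
    ContinuouslyOrbitEquivalent (inducedAct n (translation R)) (translation (ZMod n × R)) :=
  .of_conj (.refl ℤ) (valAddMulHomeomorph hn) (valAddMulHomeomorph_inducedAct hn)

theorem prodAct_translation_coe [NeZero n] (hR : IsUnit (n : R)) (hS : IsUnit (n : S)) :
    ContinuouslyOrbitEquivalent (prodAct (translation (ZMod n × R)) (translation S))
      (prodAct (translation R) (translation (ZMod n × S))) :=
  ((inducedAct_translation_coe hR).symm.prod (.refl (translation S))).trans <|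
    (prodAct_inducedAct_coe n (translation R) (translation S)).trans <|
      (ContinuouslyOrbitEquivalent.refl (translation R)).prod (inducedAct_translation_coe hS)

theorem actZ_coe_actW_general [NeZero n] (hR : IsUnit (n : R)) (hS : IsUnit (n : S)) {s : ℕ}
    (γ : (Fin s → ℤ) → T → T) :
    ContinuouslyOrbitEquivalent
      (finSuccSuccAct (translation (ZMod n × R)) (translation S) γ)
      (finSuccSuccAct (translation R) (translation (ZMod n × S)) γ) :=
  (prodAct_translation_coe hR hS).finSuccSucc γ

end Translation

theorem isUnit_natCast_padicInt {p n : ℕ} [Fact p.Prime] (hpn : p.Coprime n) :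
    IsUnit (n : ℤ_[p]) :=
  PadicInt.isUnit_iff.2 (PadicInt.norm_natCast_eq_one_iff.2 hpn)

/-- For `r = s + 2 ≥ 2`, distinct primes `p ≠ q` and `n > 1` coprime to both,
the systems `ℤ^r ↷ Z` and `ℤ^r ↷ W` are continuously orbit equivalent. -/
theorem actZ_coe_actW (p q n : ℕ) [Fact p.Prime] [Fact q.Prime] (hpq : p ≠ q)
    (hn : 1 < n) (hpn : Nat.Coprime p n) (hqn : Nat.Coprime q n) (s : ℕ) :
    ∃ (φ : ((ZMod n × ℤ_[p]) × ℤ_[q] × (Fin s → ℤ_[p])) ≃ₜ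
           (ℤ_[p] × (ZMod n × ℤ_[q]) × (Fin s → ℤ_[p])))
      (a : (Fin (s + 2) → ℤ) → (ZMod n × ℤ_[p]) × ℤ_[q] × (Fin s → ℤ_[p]) →
           (Fin (s + 2) → ℤ))
      (b : (Fin (s + 2) → ℤ) → ℤ_[p] × (ZMod n × ℤ_[q]) × (Fin s → ℤ_[p]) →
           (Fin (s + 2) → ℤ)),
      (∀ g, IsLocallyConstant (a g)) ∧
      (∀ h, IsLocallyConstant (b h)) ∧
      (∀ g z, φ (actZ p q n s g z) = actW p q n s (a g z) (φ z)) ∧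
      (∀ h w, φ.symm (actW p q n s h w) = actZ p q n s (b h w) (φ.symm w)) := by
  have : NeZero n := ⟨by lia⟩
  exact actZ_coe_actW_general (isUnit_natCast_padicInt hpn) (isUnit_natCast_padicInt hqn)
    fun h t i => t i + (h i : ℤ_[p])
end

section
/- Let G ↷ X and H ↷ Y be topologically free systems which are continuously orbit equivalent via (φ, a, b). Suppose there exist a locally constant map u : X → H and a group isomorphism ρ : G → H such that a(g, x) = u(g.x)·ρ(g)·u(x)⁻¹ for all g ∈ G and x ∈ X. Then the map ᵤφ : X → Y, x ↦ u(x)⁻¹.φ(x), is a homeomorphism satisfying ᵤφ(g.x) = ρ(g).ᵤφ(x) for all g ∈ G, x ∈ X; in particular, G ↷ X and H ↷ Y are conjugate. -/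
/-- A topological dynamical system `G ↷ X` is *topologically free* if for every
`g ≠ 1` the set of points moved by `g` is dense. -/
def TopologicallyFree (G : Type*) (X : Type*) [Group G] [TopologicalSpace X]
    [MulAction G X] : Prop :=
  ∀ g : G, g ≠ 1 → Dense {x : X | g • x ≠ x}

/-!
Topological freeness of `H ↷ Y` makes a locally constant cocycle unique, so the two orbit cocycles
invert each other: `a (b h y) (φ.symm y) = h`. Solving the relation `a g x = u (g • x) ρ(g) u(x)⁻¹`
for `b` shows that `b` is cohomologous to `ρ⁻¹`, with transfer function
`v y = ρ⁻¹(u (φ.symm y)⁻¹)`. Hence the two twisted maps `x ↦ u(x)⁻¹ • φ x` and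
`y ↦ v(y)⁻¹ • φ.symm y` are equivariant along `ρ` and `ρ⁻¹`, and equivariance makes them mutually
inverse.
-/

open Topology Function

section

variable {G H X Y : Type*}

theorem continuous_smul_of_isLocallyConstant [TopologicalSpace X] [TopologicalSpace Y] [SMul H Y]
    [ContinuousConstSMul H Y] {v : X → H} {f : X → Y} (hv : IsLocallyConstant v)
    (hf : Continuous f) : Continuous fun x ↦ v x • f x := by
  refine continuous_iff_continuousAt.mpr fun x ↦ ?_
  have hconst : ContinuousAt (fun z ↦ v x • f z) x := (hf.const_smul (v x)).continuousAt
  refine hconst.congr ?_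
  filter_upwards [hv.eventually_eq x] with z hz
  rw [hz]

theorem TopologicallyFree.eq_of_eventually_smul_eq [Group G] [TopologicalSpace X] [MulAction G X]
    (hX : TopologicallyFree G X) {g h : G} {x : X} (hgh : ∀ᶠ z in 𝓝 x, g • z = h • z) :
    g = h := by
  by_contra hne
  have hdense : Dense {z : X | (h⁻¹ * g) • z ≠ z} :=
    hX _ fun hone ↦ hne (inv_mul_eq_one.mp hone).symm
  obtain ⟨z, hmoved, hz⟩ :=
    ((mem_closure_iff_frequently.mp (hdense x)).and_eventually hgh).exists
  exact hmoved (by rw [mul_smul, hz, inv_smul_smul])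

/-- `a` is an orbit cocycle for `φ`: the map `φ` sends `G`-orbits into `H`-orbits, and the locally
constant functions `a g` record which element of `H` realises `g`. A continuous orbit equivalence
`(φ, a, b)` is a homeomorphism `φ` with orbit cocycles `a` for `φ` and `b` for `φ.symm`. -/
structure IsOrbitCocycle [SMul G X] [SMul H Y] [TopologicalSpace X] (φ : X → Y)
    (a : G → X → H) : Prop where
  isLocallyConstant (g : G) : IsLocallyConstant (a g)
  map_smul (g : G) (x : X) : φ (g • x) = a g x • φ x

theorem IsOrbitCocycle.apply_apply_of_leftInverse [SMul G X] [Group H] [MulAction H Y]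
    [TopologicalSpace X] [TopologicalSpace Y] {φ : X → Y} {ψ : Y → X} {a : G → X → H}
    {b : H → Y → G} (ha : IsOrbitCocycle φ a) (hb : IsOrbitCocycle ψ b)
    (hY : TopologicallyFree H Y) (hψ : Continuous ψ) (hφψ : LeftInverse φ ψ) (h : H) (y : Y) :
    a (b h y) (ψ y) = h := by
  refine hY.eq_of_eventually_smul_eq (x := y) ?_
  have ha_near : ∀ᶠ z in 𝓝 y, a (b h y) (ψ z) = a (b h y) (ψ y) :=
    hψ.continuousAt.eventually ((ha.isLocallyConstant _).eventually_eq (ψ y))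
  filter_upwards [ha_near, (hb.isLocallyConstant h).eventually_eq y] with z haz hbz
  calc
    a (b h y) (ψ y) • z = a (b h z) (ψ z) • φ (ψ z) := by rw [hbz, haz, hφψ z]
    _ = φ (ψ (h • z)) := by rw [← ha.map_smul, ← hb.map_smul]
    _ = h • z := hφψ _

/-- The cocycle `a` is cohomologous to `ρ`, with transfer function `u`. The map `ρ`, in practice a
homomorphism, is regarded as a cocycle that is constant in the space variable. -/
def CohomologousVia [SMul G X] [Group H] (u : X → H) (a : G → X → H) (ρ : G → H) : Prop :=
  ∀ g x, a g x = u (g • x) * ρ g * (u x)⁻¹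

/-- The map written `ᵤφ` in the paper: `φ` corrected pointwise by the transfer function `u`, so as
to become equivariant when the orbit cocycle of `φ` is cohomologous to a homomorphism via `u`. -/
def cocycleTwist [Inv H] [SMul H Y] (u : X → H) (φ : X → Y) (x : X) : Y :=
  (u x)⁻¹ • φ x

theorem continuous_cocycleTwist [TopologicalSpace X] [TopologicalSpace Y] [Inv H] [SMul H Y]
    [ContinuousConstSMul H Y] {u : X → H} {φ : X → Y} (hu : IsLocallyConstant u)
    (hφ : Continuous φ) : Continuous (cocycleTwist u φ) :=
  continuous_smul_of_isLocallyConstant hu.inv hφ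

namespace CohomologousVia

theorem isLocallyConstant [TopologicalSpace X] [SMul G X] [ContinuousConstSMul G X] [Group H]
    {u : X → H} {a : G → X → H} {ρ : G → H} (hco : CohomologousVia u a ρ)
    (hu : IsLocallyConstant u) (g : G) : IsLocallyConstant (a g) := by
  rw [show a g = fun x ↦ u (g • x) * ρ g * (u x)⁻¹ from funext (hco g)]
  exact ((hu.comp_continuous (continuous_const_smul g)).mul (IsLocallyConstant.const (ρ g))).mul
    hu.inv

theorem cocycleTwist_smul [SMul G X] [Group H] [MulAction H Y] {u : X → H} {a : G → X → H}
    {ρ : G → H} {φ : X → Y} (hco : CohomologousVia u a ρ)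
    (hφ : ∀ g x, φ (g • x) = a g x • φ x) (g : G) (x : X) :
    cocycleTwist u φ (g • x) = ρ g • cocycleTwist u φ x := by
  simp only [cocycleTwist, hφ, hco g x, mul_smul, inv_smul_smul]

theorem symm [Group G] [SMul G X] [Group H] [SMul H Y] {u : X → H} {a : G → X → H}
    {b : H → Y → G} {ψ : Y → X} {ρ : G ≃* H} (hco : CohomologousVia u a ρ)
    (hψ : ∀ h y, ψ (h • y) = b h y • ψ y) (hab : ∀ h y, a (b h y) (ψ y) = h) :
    CohomologousVia (fun y ↦ ρ.symm (u (ψ y))⁻¹) b ρ.symm := by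
  intro h y
  have hh : u (ψ (h • y)) * ρ (b h y) * (u (ψ y))⁻¹ = h := by rw [hψ, ← hco, hab]
  apply ρ.injective
  simp only [map_mul, map_inv, ρ.apply_symm_apply, inv_inv]
  rw [← mul_inv_eq_iff_eq_mul, eq_inv_mul_iff_mul_eq, ← mul_assoc, hh]

end CohomologousVia

theorem leftInverse_cocycleTwist [Group G] [MulAction G X] [Inv H] [SMul H Y] {u : X → H}
    {v : Y → G} {φ : X → Y} {ψ : Y → X} {σ : H → G} (hψφ : LeftInverse ψ φ)
    (hσ : ∀ h y, cocycleTwist v ψ (h • y) = σ h • cocycleTwist v ψ y)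
    (huv : ∀ x, v (φ x) = σ (u x)⁻¹) :
    LeftInverse (cocycleTwist v ψ) (cocycleTwist u φ) := fun x ↦
  calc
    cocycleTwist v ψ ((u x)⁻¹ • φ x) = σ (u x)⁻¹ • (v (φ x))⁻¹ • ψ (φ x) := hσ _ _
    _ = x := by rw [huv, smul_inv_smul, hψφ]

theorem conjugate_of_cocycle_cohomologous_to_isomorphism_general [Group G] [Group H]
    [TopologicalSpace X] [TopologicalSpace Y] [MulAction G X] [ContinuousConstSMul G X]
    [MulAction H Y] [ContinuousConstSMul H Y] (hY : TopologicallyFree H Y) (φ : X ≃ₜ Y)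
    {a : G → X → H} {b : H → Y → G} (hb : ∀ h, IsLocallyConstant (b h))
    (hφ : ∀ g x, φ (g • x) = a g x • φ x) (hψ : ∀ h y, φ.symm (h • y) = b h y • φ.symm y)
    {u : X → H} (hu : IsLocallyConstant u) (ρ : G ≃* H)
    (hco : ∀ g x, a g x = u (g • x) * ρ g * (u x)⁻¹) :
    ∃ φ' : X ≃ₜ Y, (∀ x, φ' x = (u x)⁻¹ • φ x) ∧ ∀ g x, φ' (g • x) = ρ g • φ' x := by
  have hua : CohomologousVia u a ρ := hco
  have ha : IsOrbitCocycle φ a := ⟨hua.isLocallyConstant hu, hφ⟩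
  let v : Y → G := fun y ↦ ρ.symm (u (φ.symm y))⁻¹
  have hv : IsLocallyConstant v :=
    (hu.inv.comp ρ.symm).comp_continuous φ.symm.continuous
  have hvb : CohomologousVia v b ρ.symm :=
    hua.symm hψ <|
      ha.apply_apply_of_leftInverse ⟨hb, hψ⟩ hY φ.symm.continuous φ.apply_symm_apply
  have hφ_equivariant := hua.cocycleTwist_smul hφ
  have hψ_equivariant := hvb.cocycleTwist_smul hψ
  let φ' : X ≃ₜ Y :=
    { toFun := cocycleTwist u φ
      invFun := cocycleTwist v φ.symm
      left_inv := leftInverse_cocycleTwist φ.symm_apply_apply hψ_equivariant fun x ↦ by simp [v]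
      right_inv := leftInverse_cocycleTwist φ.apply_symm_apply hφ_equivariant fun y ↦ by simp [v]
      continuous_toFun := continuous_cocycleTwist hu φ.continuous
      continuous_invFun := continuous_cocycleTwist hv φ.symm.continuous }
  exact ⟨φ', fun _ ↦ rfl, hφ_equivariant⟩

end

/-- Suppose topologically free systems `G ↷ X` and `H ↷ Y` are continuously orbit
equivalent via `(φ, a, b)`, and the cocycle `a` is cohomologous to a group
isomorphism `ρ : G ≃* H` via a locally constant `u : X → H`. Then
`x ↦ u(x)⁻¹ • φ(x)` is a homeomorphism intertwining the actions via `ρ`;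
in particular the systems are conjugate. -/
theorem conjugate_of_cocycle_cohomologous_to_isomorphism
    (G : Type*) (X : Type*) (H : Type*) (Y : Type*)
    [Group G] [Group H]
    [TopologicalSpace X] [LocallyCompactSpace X] [T2Space X]
    [TopologicalSpace Y] [LocallyCompactSpace Y] [T2Space Y]
    [MulAction G X] [ContinuousConstSMul G X]
    [MulAction H Y] [ContinuousConstSMul H Y]
    (hX : TopologicallyFree G X) (hY : TopologicallyFree H Y)
    (φ : X ≃ₜ Y) (a : G → X → H) (b : H → Y → G)
    (ha : ∀ g : G, IsLocallyConstant (a g))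
    (hb : ∀ h : H, IsLocallyConstant (b h))
    (hφ : ∀ (g : G) (x : X), φ (g • x) = a g x • φ x)
    (hψ : ∀ (h : H) (y : Y), φ.symm (h • y) = b h y • φ.symm y)
    (u : X → H) (hu : IsLocallyConstant u) (ρ : G ≃* H)
    (hco : ∀ (g : G) (x : X), a g x = u (g • x) * ρ g * (u x)⁻¹) :
    ∃ φ' : X ≃ₜ Y,
      (∀ x : X, φ' x = (u x)⁻¹ • φ x) ∧
      (∀ (g : G) (x : X), φ' (g • x) = ρ g • φ' x) :=
  conjugate_of_cocycle_cohomologous_to_isomorphism_general hY φ hb hφ hψ hu ρ hco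
end

section
/- Let G be a countable torsion-free group satisfying the Følner condition. Let G ↷ X and H ↷ Y be topologically free systems on nonempty compact Hausdorff spaces X and Y which are continuously orbit equivalent via (φ, a, b). If there exist a locally constant map u : X → H and a group homomorphism ρ : G → H such that a(g, x) = u(g.x)·ρ(g)·u(x)⁻¹ for all g ∈ G and x ∈ X, then ρ is a group isomorphism. -/
open scoped Classical in
/-- A group `G` satisfies the *Følner condition* if for every finite `S ⊆ G` and
`ε > 0` there is a nonempty finite `F ⊆ G` with `|sF △ F| < ε·|F|` for all `s ∈ S`. -/
def FolnerCondition (G : Type*) [Group G] : Prop :=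
  ∀ (S : Finset G) (ε : ℝ), 0 < ε → ∃ F : Finset G, F.Nonempty ∧
    ∀ s ∈ S,
      (((F.image (fun x => s * x) \ F) ∪ (F \ F.image (fun x => s * x))).card : ℝ) <
        ε * (F.card : ℝ)

/-!
If `ρ g = 1`, then `φ (g • x) = (u (g • x) * (u x)⁻¹) • φ x`, so `u` is injective on the orbits of
the kernel of `ρ`. As `u` takes finitely many values, these orbits have bounded size; since the
action is faithful, the kernel has finite exponent and, `G` being torsion-free, is trivial.

By topological freeness of `H ↷ Y`, the map `g ↦ a g x` is onto `H`, hence so is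
`θ g = u (g • x) * ρ g`. If some `h` were not in the range of `ρ`, then for every finite `F ⊆ G` the
disjoint sets `ρ F` and `h ρ F` would both lie in `θ (S F)` for a finite `S ⊆ G` independent of `F`,
giving `2 |F| ≤ |S F|` and contradicting amenability.
-/

open Function
open scoped Pointwise Topology

theorem two_mul_card_le_card_mul {G H : Type*} [Group G] [DecidableEq G] [Group H] {ρ : G →* H}
    (hρ : Injective ρ) {θ : G → H} (hθ : Surjective θ) {h : H} (hh : ¬∃ g, ρ g = h) {S : Finset G}
    (hS : ∀ f g, θ g = ρ f → g * f⁻¹ ∈ S) (hS' : ∀ f g, θ g = h * ρ f → g * f⁻¹ ∈ S)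
    (F : Finset G) : 2 * F.card ≤ (S * F).card := by
  classical
  have hcover (τ : G → H) (hτ : ∀ f g, θ g = τ f → g * f⁻¹ ∈ S) :
      F.image τ ⊆ (S * F).image θ := by
    refine Finset.image_subset_iff.2 fun f hf ↦ ?_
    obtain ⟨g, hg⟩ := hθ (τ f)
    exact Finset.mem_image.2
      ⟨g, Finset.mem_mul.2 ⟨g * f⁻¹, hτ f g hg, f, hf, inv_mul_cancel_right g f⟩, hg⟩
  have hdisj : Disjoint (F.image ρ) (F.image fun f ↦ h * ρ f) := by
    simp only [Finset.disjoint_left, Finset.mem_image, not_exists, not_and]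
    rintro _ ⟨f, -, rfl⟩ f' - heq
    exact hh ⟨f * f'⁻¹, by rw [map_mul, map_inv, mul_inv_eq_iff_eq_mul, heq]⟩
  have htranslate : Injective fun f ↦ h * ρ f := (mul_right_injective h).comp hρ
  calc 2 * F.card
      = (F.image ρ ∪ F.image fun f ↦ h * ρ f).card := by
        rw [Finset.card_union_of_disjoint hdisj, Finset.card_image_of_injective _ hρ,
          Finset.card_image_of_injective _ htranslate, two_mul]
    _ ≤ ((S * F).image θ).card :=
        Finset.card_le_card (Finset.union_subset (hcover _ hS) (hcover _ hS'))
    _ ≤ (S * F).card := Finset.card_image_le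

namespace FolnerCondition

variable {G H : Type*} [Group G] [Group H]

open scoped Classical in
theorem exists_card_mul_lt (hG : FolnerCondition G) (S : Finset G) {ε : ℝ} (hε : 0 < ε) :
    ∃ F : Finset G, ((S * F).card : ℝ) < (1 + ε) * F.card := by
  obtain ⟨F, hF, hlt⟩ := hG S (ε / (S.card + 1)) (by positivity)
  refine ⟨F, ?_⟩
  have : (0 : ℝ) < F.card := by exact_mod_cast hF.card_pos
  have hsubset : (S * F) \ F ⊆ S.biUnion fun s ↦ F.image (s * ·) \ F := by
    intro z hz
    obtain ⟨hz, hzF⟩ := Finset.mem_sdiff.1 hz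
    obtain ⟨s, hs, f, hf, rfl⟩ := Finset.mem_mul.1 hz
    exact Finset.mem_biUnion.2
      ⟨s, hs, Finset.mem_sdiff.2 ⟨Finset.mem_image_of_mem _ hf, hzF⟩⟩
  have htranslate (s : G) (hs : s ∈ S) :
      ((F.image (s * ·) \ F).card : ℝ) ≤ ε / (S.card + 1) * F.card :=
    le_trans (by exact_mod_cast Finset.card_le_card Finset.subset_union_left) (hlt s hs).le
  have hboundary : (((S * F) \ F).card : ℝ) < ε * F.card :=
    calc (((S * F) \ F).card : ℝ)
        ≤ ∑ s ∈ S, ((F.image (s * ·) \ F).card : ℝ) := by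
          exact_mod_cast (Finset.card_le_card hsubset).trans Finset.card_biUnion_le
      _ ≤ S.card * (ε / (S.card + 1) * F.card) := by
          simpa only [nsmul_eq_mul] using Finset.sum_le_card_nsmul S _ _ htranslate
      _ < (S.card + 1) * (ε / (S.card + 1) * F.card) := by gcongr; exact lt_add_one _
      _ = ε * F.card := by field_simp
  have hsplit : ((S * F).card : ℝ) ≤ ((S * F) \ F).card + F.card := by
    exact_mod_cast Finset.card_le_card_sdiff_add_card
  linarith

theorem surjective_of_finite_range_mul_inv (hG : FolnerCondition G) {ρ : G →* H}
    (hρ : Injective ρ) {θ : G → H} (hθ : Surjective θ)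
    (hfin : (Set.range fun g ↦ θ g * (ρ g)⁻¹).Finite) : Surjective ρ := by
  classical
  intro h
  by_contra hh
  set K := Set.range fun g ↦ θ g * (ρ g)⁻¹
  have hSfin : (ρ ⁻¹' (K⁻¹ * {1, h})).Finite :=
    (hfin.inv.mul (Set.toFinite _)).preimage hρ.injOn
  -- If `θ g = k * ρ g = t * ρ f`, then `ρ (g * f⁻¹) = k⁻¹ * t`.
  have hmem {f g : G} {t : H} (ht : t ∈ ({1, h} : Set H)) (hg : θ g = t * ρ f) :
      g * f⁻¹ ∈ hSfin.toFinset := by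
    refine hSfin.mem_toFinset.2 ⟨_, Set.inv_mem_inv.2 ⟨g, rfl⟩, t, ht, ?_⟩
    simp only [hg, map_mul, map_inv]
    group
  obtain ⟨F, hF⟩ := hG.exists_card_mul_lt hSfin.toFinset one_pos
  have htwo : 2 * (F.card : ℝ) ≤ (hSfin.toFinset * F).card := by
    exact_mod_cast two_mul_card_le_card_mul hρ hθ hh
      (fun f g hg ↦ hmem (by simp) (hg.trans (one_mul _).symm)) (fun f g hg ↦ hmem (by simp) hg) F
  linarith

end FolnerCondition

section BoundedOrbits

variable {G X ι : Type*} [Group G] [MulAction G X] {u : X → ι}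

theorem pow_factorial_ncard_range_smul_eq_self (hu : (Set.range u).Finite) {g : G}
    (hfix : ∀ (n : ℕ) (x : X), u (g ^ n • x) = u x → g ^ n • x = x) (x : X) :
    g ^ (Set.range u).ncard.factorial • x = x := by
  obtain ⟨m, n, hmn, hn, hval⟩ : ∃ m n, m < n ∧ n ≤ (Set.range u).ncard ∧
      u (g ^ n • x) = u (g ^ m • x) := by
    have hmaps : Set.MapsTo (fun n ↦ u (g ^ n • x))
        (Finset.range ((Set.range u).ncard + 1)) hu.toFinset := fun n _ ↦ by simp
    obtain ⟨m, hm, n, hn, hne, heq⟩ := Finset.exists_ne_map_eq_of_card_lt_of_maps_to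
      (by rw [Finset.card_range, ← Set.ncard_eq_toFinset_card _ hu]; exact Nat.lt_succ_self _)
      hmaps
    rw [Finset.mem_range, Nat.lt_succ_iff] at hm hn
    rcases hne.lt_or_gt with hlt | hlt
    exacts [⟨m, n, hlt, hn, heq.symm⟩, ⟨n, m, hlt, hm, heq⟩]
  obtain ⟨k, rfl⟩ := Nat.exists_eq_add_of_le' hmn.le
  have hperiod : g ^ k • x = x := by
    have hfixed := hfix k (g ^ m • x) (by rw [smul_smul, ← pow_add, hval])
    rw [smul_smul, pow_mul_comm, ← smul_smul] at hfixed
    exact smul_left_cancel _ hfixed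
  rw [MulAction.pow_smul_eq_iff_period_dvd] at hperiod ⊢
  exact hperiod.trans (Nat.dvd_factorial (by lia) (by lia))

theorem exponentExists_of_finite_range_of_smul_eq_self [FaithfulSMul G X]
    (hu : (Set.range u).Finite)
    (hfix : ∀ (g : G) (x : X), u (g • x) = u x → g • x = x) : Monoid.ExponentExists G :=
  ⟨_, Nat.factorial_pos _, fun g ↦ FaithfulSMul.eq_of_smul_eq_smul fun x : X ↦ by
    rw [pow_factorial_ncard_range_smul_eq_self hu (fun n ↦ hfix (g ^ n)), one_smul]⟩

end BoundedOrbits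

namespace TopologicallyFree

variable {G X H Y : Type*} [Group H] [TopologicalSpace Y] [MulAction H Y]

theorem eq_of_eventually_smul_eq_s10 (hY : TopologicallyFree H Y) {h k : H} {y₀ : Y}
    (heq : ∀ᶠ y in 𝓝 y₀, h • y = k • y) : h = k := by
  by_contra hne
  obtain ⟨y, hmove, hy⟩ :=
    (hY (k⁻¹ * h) (by rwa [Ne, inv_mul_eq_one, eq_comm])).inter_nhds_nonempty heq
  exact hmove (by rw [mul_smul, hy, inv_smul_smul])

theorem faithfulSMul [Nonempty Y] (hY : TopologicallyFree H Y) : FaithfulSMul H Y :=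
  ⟨fun heq ↦ hY.eq_of_eventually_smul_eq_s10 (y₀ := Classical.arbitrary Y) (.of_forall heq)⟩

theorem cocycle_inverse_cocycle [TopologicalSpace X] [SMul G X] (hY : TopologicallyFree H Y)
    (φ : X ≃ₜ Y) {a : G → X → H} {b : H → Y → G}
    (ha : ∀ g, IsLocallyConstant (a g)) (hb : ∀ h, IsLocallyConstant (b h))
    (hφ : ∀ g x, φ (g • x) = a g x • φ x)
    (hψ : ∀ h y, φ.symm (h • y) = b h y • φ.symm y) (h : H) (x : X) :
    a (b h (φ x)) x = h := by
  set g := b h (φ x)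
  refine hY.eq_of_eventually_smul_eq_s10 (y₀ := φ x) ?_
  have ha_near := (φ.symm.continuous.tendsto (φ x)).eventually ((ha g).eventually_eq _)
  filter_upwards [ha_near, (hb h).eventually_eq (φ x)] with y hay hby
  rw [φ.symm_apply_apply] at hay
  calc a g x • y = a g (φ.symm y) • φ (φ.symm y) := by rw [hay, φ.apply_symm_apply]
    _ = φ (g • φ.symm y) := (hφ _ _).symm
    _ = φ (φ.symm (h • y)) := by rw [hψ, hby]
    _ = h • y := φ.apply_symm_apply _

end TopologicallyFree

section OrbitMap

variable {G X H Y : Type*} [Group G] [Group H] [MulAction G X] [MulAction H Y]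
  {φ : X → Y} {a : G → X → H} {u : X → H} {ρ : G →* H}

theorem smul_eq_self_of_mem_ker (hinj : Injective φ) (hφ : ∀ g x, φ (g • x) = a g x • φ x)
    (hco : ∀ g x, a g x = u (g • x) * ρ g * (u x)⁻¹) {g : G} (hg : g ∈ ρ.ker) {x : X}
    (hux : u (g • x) = u x) : g • x = x :=
  hinj <| by rw [hφ, hco, MonoidHom.mem_ker.1 hg, hux, mul_one, mul_inv_cancel, one_smul]

theorem injective_of_cohomologous_hom [FaithfulSMul G X]
    (htf : ∀ g : G, g ≠ 1 → ¬IsOfFinOrder g) (hinj : Injective φ)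
    (hφ : ∀ g x, φ (g • x) = a g x • φ x) (hu : (Set.range u).Finite)
    (hco : ∀ g x, a g x = u (g • x) * ρ g * (u x)⁻¹) : Injective ρ := by
  have hker : Monoid.ExponentExists ρ.ker :=
    exponentExists_of_finite_range_of_smul_eq_self hu fun g _ ↦
      smul_eq_self_of_mem_ker hinj hφ hco g.2
  refine (injective_iff_map_eq_one ρ).2 fun g hg ↦ by_contra fun hne ↦ htf g hne ?_
  exact ρ.ker.subtype.isOfFinOrder (hker.isOfFinOrder (g := ⟨g, hg⟩))

end OrbitMap

theorem cocycle_cohomologous_hom_is_isomorphism_general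
    {G X H Y : Type*} [Group G] [Group H]
    (htf : ∀ g : G, g ≠ 1 → ¬IsOfFinOrder g) (hamen : FolnerCondition G)
    [TopologicalSpace X] [Nonempty X] [TopologicalSpace Y]
    [MulAction G X] [FaithfulSMul G X] [MulAction H Y] (hY : TopologicallyFree H Y)
    (φ : X ≃ₜ Y) {a : G → X → H} {b : H → Y → G}
    (ha : ∀ g, IsLocallyConstant (a g)) (hb : ∀ h, IsLocallyConstant (b h))
    (hφ : ∀ g x, φ (g • x) = a g x • φ x)
    (hψ : ∀ h y, φ.symm (h • y) = b h y • φ.symm y)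
    {u : X → H} (hu : (Set.range u).Finite) {ρ : G →* H}
    (hco : ∀ g x, a g x = u (g • x) * ρ g * (u x)⁻¹) : Bijective ρ := by
  have hρ : Injective ρ := injective_of_cohomologous_hom htf φ.injective hφ hu hco
  obtain ⟨x⟩ := ‹Nonempty X›
  have hθ : Surjective fun g ↦ u (g • x) * ρ g := fun h ↦
    ⟨b (h * (u x)⁻¹) (φ x), mul_right_cancel <|
      (hco _ x).symm.trans (hY.cocycle_inverse_cocycle φ ha hb hφ hψ (h * (u x)⁻¹) x)⟩
  refine ⟨hρ, hamen.surjective_of_finite_range_mul_inv hρ hθ (hu.subset ?_)⟩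
  rintro _ ⟨g, rfl⟩
  exact ⟨g • x, (mul_inv_cancel_right _ _).symm⟩

/-- Let `G` be a countable torsion-free group satisfying the Følner condition, and let
`G ↷ X`, `H ↷ Y` be topologically free systems on nonempty compact Hausdorff spaces
which are continuously orbit equivalent via `(φ, a, b)`. If the cocycle `a` is
cohomologous, via a locally constant `u : X → H`, to a group homomorphism
`ρ : G →* H`, then `ρ` is an isomorphism. -/
theorem cocycle_cohomologous_hom_is_isomorphism
    (G : Type*) (X : Type*) (H : Type*) (Y : Type*)
    [Group G] [Countable G] [Group H]
    (htf : ∀ g : G, g ≠ 1 → ¬IsOfFinOrder g)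
    (hamen : FolnerCondition G)
    [TopologicalSpace X] [CompactSpace X] [T2Space X] [Nonempty X]
    [TopologicalSpace Y] [CompactSpace Y] [T2Space Y] [Nonempty Y]
    [MulAction G X] [ContinuousConstSMul G X]
    [MulAction H Y] [ContinuousConstSMul H Y]
    (hX : TopologicallyFree G X) (hY : TopologicallyFree H Y)
    (φ : X ≃ₜ Y) (a : G → X → H) (b : H → Y → G)
    (ha : ∀ g : G, IsLocallyConstant (a g))
    (hb : ∀ h : H, IsLocallyConstant (b h))
    (hφ : ∀ (g : G) (x : X), φ (g • x) = a g x • φ x)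
    (hψ : ∀ (h : H) (y : Y), φ.symm (h • y) = b h y • φ.symm y)
    (u : X → H) (hu : IsLocallyConstant u) (ρ : G →* H)
    (hco : ∀ (g : G) (x : X), a g x = u (g • x) * ρ g * (u x)⁻¹) :
    Function.Bijective ρ := by
  have := hX.faithfulSMul
  exact cocycle_cohomologous_hom_is_isomorphism_general htf hamen hY φ ha hb hφ hψ
    hu.range_finite hco
end
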